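/- For all natural numbers j ≤ n, the set { ⟨j⟩⟨n⟩^k⊤ : k < ω } is j-conservative over the formula ⟨n+1⟩⊤; that is, for every GLP_ω formula ψ, ⟨n+1⟩⊤ ⊢_GLP ⟨j⟩ψ if and only if { ⟨j⟩⟨n⟩^k⊤ : k < ω } ⊢_GLP ⟨j⟩ψ. Here ⟨n⟩^k⊤ denotes k iterated applications of ⟨n⟩ to ⊤. -/

import Mathlib

/-- Formulas of polymodal provability logic GLP: propositional variables, ⊤,
Boolean connectives, and a modality `[ξ]` for each ordinal `ξ`. -/
inductive GLPFormula : Type 1 where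
  | var : ℕ → GLPFormula
  | top : GLPFormula
  | neg : GLPFormula → GLPFormula
  | and : GLPFormula → GLPFormula → GLPFormula
  | imp : GLPFormula → GLPFormula → GLPFormula
  | box : Ordinal → GLPFormula → GLPFormula

namespace GLPFormula

/-- `⟨ξ⟩φ` abbreviates `¬[ξ]¬φ`. -/
def dia (ξ : Ordinal) (φ : GLPFormula) : GLPFormula := neg (box ξ (neg φ))

/-- Biconditional, defined from the other connectives. -/
def biimp (φ ψ : GLPFormula) : GLPFormula := and (imp φ ψ) (imp ψ φ)

/-- The set of ordinals occurring as modality indices in a formula. -/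
def mods : GLPFormula → Set Ordinal
  | var _ => ∅
  | top => ∅
  | neg φ => mods φ
  | and φ ψ => mods φ ∪ mods ψ
  | imp φ ψ => mods φ ∪ mods ψ
  | box ξ φ => insert ξ (mods φ)

end GLPFormula

/-- A propositional tautology: true under every Boolean valuation that respects
the Boolean connectives (variables and boxed formulas are treated as atoms). -/
def IsTautology (φ : GLPFormula) : Prop :=
  ∀ v : GLPFormula → Bool,
    v GLPFormula.top = true →
    (∀ ψ, v ψ.neg = !v ψ) →
    (∀ ψ χ, v (ψ.and χ) = (v ψ && v χ)) →
    (∀ ψ χ, v (ψ.imp χ) = (!v ψ || v χ)) →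
    v φ = true

/-- Derivability in GLP, with modality indices restricted to the set `S`
(`S = Set.univ` gives full GLP; `S = Set.Iio ω` gives GLP_ω). -/
inductive GLPProof (S : Set Ordinal) : GLPFormula → Prop where
  | taut {φ} : φ.mods ⊆ S → IsTautology φ → GLPProof S φ
  | distr {ξ φ ψ} : ξ ∈ S → φ.mods ⊆ S → ψ.mods ⊆ S →
      GLPProof S ((GLPFormula.box ξ (φ.imp ψ)).imp
        ((GLPFormula.box ξ φ).imp (GLPFormula.box ξ ψ)))
  | trans {ξ φ} : ξ ∈ S → φ.mods ⊆ S →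
      GLPProof S ((GLPFormula.box ξ φ).imp (GLPFormula.box ξ (GLPFormula.box ξ φ)))
  | lob {ξ φ} : ξ ∈ S → φ.mods ⊆ S →
      GLPProof S ((GLPFormula.box ξ ((GLPFormula.box ξ φ).imp φ)).imp (GLPFormula.box ξ φ))
  | negIntro {ξ ζ φ} : ξ < ζ → ξ ∈ S → ζ ∈ S → φ.mods ⊆ S →
      GLPProof S ((GLPFormula.dia ζ φ).imp (GLPFormula.dia ξ φ))
  | mono {ξ ζ φ} : ξ < ζ → ξ ∈ S → ζ ∈ S → φ.mods ⊆ S →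
      GLPProof S ((GLPFormula.dia ξ φ).imp (GLPFormula.box ζ (GLPFormula.dia ξ φ)))
  | mp {φ ψ} : GLPProof S (φ.imp ψ) → GLPProof S φ → GLPProof S ψ
  | nec {ξ φ} : ξ ∈ S → GLPProof S φ → GLPProof S (GLPFormula.box ξ φ)

/-- Derivability in full GLP (modalities indexed by all ordinals). -/
def GLPProves (φ : GLPFormula) : Prop := GLPProof Set.univ φ

/-- Derivability in GLP_ω (modalities indexed by natural numbers). -/
def GLPomegaProves (φ : GLPFormula) : Prop := GLPProof (Set.Iio Ordinal.omega0) φ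

/-- A GLP_ω formula: all modality indices are below ω. -/
def IsOmegaFormula (φ : GLPFormula) : Prop := φ.mods ⊆ Set.Iio Ordinal.omega0

/-- Conjunction of a finite list of formulas. -/
def listConj : List GLPFormula → GLPFormula
  | [] => GLPFormula.top
  | φ :: l => φ.and (listConj l)

/-- `SetProves S τ χ`: the set `τ` proves `χ`, i.e. `ψ₁ ∧ … ∧ ψₘ → χ` is
derivable for some finite list of members of `τ`. -/
def SetProves (S : Set Ordinal) (τ : Set GLPFormula) (χ : GLPFormula) : Prop :=
  ∃ l : List GLPFormula, (∀ ψ ∈ l, ψ ∈ τ) ∧ GLPProof S ((listConj l).imp χ)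

/-- The iterated consistency formulas: `Q n 0 φ = ⊤`, `Q n (k+1) φ = ⟨n⟩(φ ∧ Q n k φ)`. -/
def Q (n : Ordinal) : ℕ → GLPFormula → GLPFormula
  | 0, _ => GLPFormula.top
  | k + 1, φ => GLPFormula.dia n ((GLPFormula.and φ (Q n k φ)))

/-- `diaPow n k φ` is `⟨n⟩^k φ`, `k` iterated applications of `⟨n⟩`. -/
def diaPow (n : Ordinal) : ℕ → GLPFormula → GLPFormula
  | 0, φ => φ
  | k + 1, φ => GLPFormula.dia n (diaPow n k φ)

/-- The formula corresponding to a worm, given as its list of modality indices: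
`[] ↦ ⊤` and `γ :: A ↦ ⟨γ⟩A`. -/
def wormFormula : List Ordinal → GLPFormula
  | [] => GLPFormula.top
  | γ :: A => GLPFormula.dia γ (wormFormula A)

/-- The generalized `Q`-formula: `Q(⊤,φ) = ⊤`, `Q(⟨γ⟩A, φ) = ⟨γ⟩(φ ∧ Q(A,φ))`. -/
def QWorm : List Ordinal → GLPFormula → GLPFormula
  | [], _ => GLPFormula.top
  | γ :: A, φ => GLPFormula.dia γ (GLPFormula.and φ (QWorm A φ))

/-!
Maximal GLP-consistent sets of formulas are called worlds, and `boxTheory v i` is the set of `φ`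
with `[i]φ` true at the world `v`. If a world `v` satisfies every `⟨j⟩⟨n⟩^k⊤`, Lindenbaum's lemma
gives a world `u ⊇ boxTheory v j` satisfying every `⟨n⟩^k⊤`. Among the extensions of `boxTheory u n`
closed under `[n]`-necessitation, take a maximal one `G` containing no `¬⟨n⟩^k⊤`: since
`[n]¬⟨n⟩^k⊤` is `¬⟨n⟩^(k+1)⊤`, each `φ ∉ G` has `[n]φ → ¬⟨n⟩^k⊤` in `G` for some `k`, so a world
`u' ⊇ G` satisfying every `⟨n⟩^k⊤` has `boxTheory u' n = G ⊆ u'`. Such an `n`-reflexive world can be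
given a new `boxTheory` at `n + 1`, consisting of formulas true at `u'` and hence consistent,
without changing the truth values of `[i]φ` for `i ≤ n`. The world obtained satisfies `⟨n+1⟩⊤`
together with every `[j]φ` true at `v`.
-/

namespace GLP

open GLPFormula

variable {I : Set Ordinal} {O T u v : Set GLPFormula} {φ ψ χ : GLPFormula} {i j k m n : Ordinal}

/-- Boolean valuations in the sense of `IsTautology`, encoded as their sets of true formulas. -/
structure IsValuation (v : Set GLPFormula) : Prop where
  top_mem : top ∈ v
  neg_mem_iff {φ : GLPFormula} : φ.neg ∈ v ↔ φ ∉ v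
  and_mem_iff {φ ψ : GLPFormula} : φ.and ψ ∈ v ↔ φ ∈ v ∧ ψ ∈ v
  imp_mem_iff {φ ψ : GLPFormula} : φ.imp ψ ∈ v ↔ (φ ∈ v → ψ ∈ v)

/-- Maximal GLP-consistent sets of formulas, the points of the canonical model: Boolean valuations
making all theorems of GLP true. -/
structure IsWorld (v : Set GLPFormula) : Prop extends IsValuation v where
  mem_of_proves {φ : GLPFormula} : GLPProves φ → φ ∈ v

/-- Sets of formulas containing GLP and closed under modus ponens and under necessitation for the
modalities in `I`. -/
structure IsTheory (I : Set Ordinal) (T : Set GLPFormula) : Prop where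
  mem_of_proves {φ : GLPFormula} : GLPProves φ → φ ∈ T
  mp {φ ψ : GLPFormula} : φ.imp ψ ∈ T → φ ∈ T → ψ ∈ T
  box_mem {i : Ordinal} {φ : GLPFormula} : i ∈ I → φ ∈ T → box i φ ∈ T

/-- The formulas necessary for `[i]` at `v`; the canonical accessibility relation for `[i]` is
`boxTheory v i ⊆ w`. -/
def boxTheory (v : Set GLPFormula) (i : Ordinal) : Set GLPFormula := {φ | box i φ ∈ v}

/-! ### Theories and Lindenbaum's lemma -/

theorem isTautology_iff_forall_isValuation : IsTautology φ ↔ ∀ v, IsValuation v → φ ∈ v := by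
  classical
  constructor
  · intro h v hv
    simpa using h (fun ψ => decide (ψ ∈ v)) (by simpa using hv.top_mem)
      (by simp [hv.neg_mem_iff]) (by simp [hv.and_mem_iff])
      (fun ψ χ => by by_cases ψ ∈ v <;> simp_all [hv.imp_mem_iff])
  · intro h v htop hneg hand himp
    refine h {ψ | v ψ = true} ⟨htop, fun {ψ} => ?_, fun {ψ χ} => ?_, fun {ψ χ} => ?_⟩
    · simp [hneg]
    · simp [hand]
    · cases hψ : v ψ <;> simp [himp, hψ]

theorem proves_of_forall_isValuation (h : ∀ v, IsValuation v → φ ∈ v) : GLPProves φ :=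
  .taut (Set.subset_univ _) (isTautology_iff_forall_isValuation.2 h)

theorem IsTheory.mem_of_forall_isValuation (hT : IsTheory I T) (hφ : φ ∈ T)
    (h : ∀ v, IsValuation v → φ ∈ v → ψ ∈ v) : ψ ∈ T :=
  hT.mp (hT.mem_of_proves (proves_of_forall_isValuation fun v hv => hv.imp_mem_iff.2 (h v hv))) hφ

theorem IsTheory.mem_of_forall_isValuation₂ (hT : IsTheory I T) (hφ : φ ∈ T) (hψ : ψ ∈ T)
    (h : ∀ v, IsValuation v → φ ∈ v → ψ ∈ v → χ ∈ v) : χ ∈ T :=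
  hT.mp (hT.mem_of_forall_isValuation hφ fun v hv hφv => hv.imp_mem_iff.2 (h v hv hφv)) hψ

theorem IsTheory.anti {J : Set Ordinal} (hT : IsTheory J T) (hIJ : I ⊆ J) : IsTheory I T :=
  ⟨hT.mem_of_proves, hT.mp, fun hi => hT.box_mem (hIJ hi)⟩

theorem isTheory_univ : IsTheory I Set.univ :=
  ⟨fun _ => trivial, fun _ _ => trivial, fun _ _ => trivial⟩

theorem IsTheory.setOf_imp_mem (hT : IsTheory I T) (hφ : ∀ i ∈ I, φ.imp (box i φ) ∈ T) :
    IsTheory I {ψ | φ.imp ψ ∈ T} where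
  mem_of_proves hψ := hT.mem_of_forall_isValuation (hT.mem_of_proves hψ) fun v hv hψv =>
    hv.imp_mem_iff.2 fun _ => hψv
  mp h₁ h₂ := hT.mem_of_forall_isValuation₂ h₁ h₂ fun v hv => by
    simp only [hv.imp_mem_iff]
    tauto
  box_mem {i ψ} hi h := by
    have hbox : (box i φ).imp (box i ψ) ∈ T :=
      hT.mp (hT.mem_of_proves (.distr trivial (Set.subset_univ _) (Set.subset_univ _)))
        (hT.box_mem hi h)
    exact hT.mem_of_forall_isValuation₂ (hφ i hi) hbox fun v hv => by
      simp only [hv.imp_mem_iff]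
      tauto

/-- The theories maximal among those disjoint from `O`, as in the prime ideal theorem. -/
abbrev IsMaximalAvoiding (I : Set Ordinal) (O M : Set GLPFormula) : Prop :=
  Maximal (fun T => IsTheory I T ∧ Disjoint T O) M

theorem IsTheory.sUnion {c : Set (Set GLPFormula)} (hc : ∀ T ∈ c, IsTheory I T)
    (hdir : DirectedOn (· ⊆ ·) c) (hne : c.Nonempty) : IsTheory I (⋃₀ c) where
  mem_of_proves hφ := by
    obtain ⟨T, hT⟩ := hne
    exact ⟨T, hT, (hc T hT).mem_of_proves hφ⟩
  mp := by
    rintro φ ψ ⟨T₁, hT₁, h₁⟩ ⟨T₂, hT₂, h₂⟩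
    obtain ⟨T, hT, hT₁T, hT₂T⟩ := hdir T₁ hT₁ T₂ hT₂
    exact ⟨T, hT, (hc T hT).mp (hT₁T h₁) (hT₂T h₂)⟩
  box_mem := by
    rintro i φ hi ⟨T, hT, hφ⟩
    exact ⟨T, hT, (hc T hT).box_mem hi hφ⟩

theorem IsTheory.exists_isMaximalAvoiding (hT : IsTheory I T) (hTO : Disjoint T O) :
    ∃ M, T ⊆ M ∧ IsMaximalAvoiding I O M :=
  zorn_subset_nonempty {T | IsTheory I T ∧ Disjoint T O}
    (fun c hc hchain hne => ⟨⋃₀ c,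
      ⟨.sUnion (fun _ hT => (hc hT).1) hchain.directedOn hne,
        Set.disjoint_sUnion_left.2 fun _ hT => (hc hT).2⟩,
      fun _ => Set.subset_sUnion_of_mem⟩) T ⟨hT, hTO⟩

theorem IsMaximalAvoiding.exists_imp_mem {M : Set GLPFormula} (hM : IsMaximalAvoiding I O M)
    (hbox : ∀ i ∈ I, φ.imp (box i φ) ∈ M) (hφ : φ ∉ M) : ∃ o ∈ O, φ.imp o ∈ M := by
  by_contra! hO
  have hle : {ψ | φ.imp ψ ∈ M} ⊆ M :=
    hM.le_of_ge ⟨hM.prop.1.setOf_imp_mem hbox,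
      Set.disjoint_right.2 hO⟩ fun ψ hψ =>
        hM.prop.1.mem_of_forall_isValuation hψ fun v hv hψv => hv.imp_mem_iff.2 fun _ => hψv
  exact hφ (hle (hM.prop.1.mem_of_proves
    (proves_of_forall_isValuation fun v hv => hv.imp_mem_iff.2 id)))

theorem IsMaximalAvoiding.neg_mem_iff {M : Set GLPFormula} (hM : IsMaximalAvoiding ∅ O M)
    (hne : O.Nonempty) (hdir : DirectedOn (fun φ ψ => GLPProves (φ.imp ψ)) O) :
    φ.neg ∈ M ↔ φ ∉ M := by
  obtain ⟨hT, hMO⟩ := hM.prop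
  constructor
  · obtain ⟨o, ho⟩ := hne
    exact fun hneg hφ => hMO.notMem_of_mem_right ho <|
      hT.mem_of_forall_isValuation₂ hneg hφ fun v hv hneg hφ => absurd hφ (hv.neg_mem_iff.1 hneg)
  · intro hφ
    by_contra hneg
    obtain ⟨o₁, ho₁, h₁⟩ := hM.exists_imp_mem (by simp) hφ
    obtain ⟨o₂, ho₂, h₂⟩ := hM.exists_imp_mem (by simp) hneg
    obtain ⟨o, ho, ho₁o, ho₂o⟩ := hdir o₁ ho₁ o₂ ho₂
    have h₁' : φ.imp o ∈ M := hT.mem_of_forall_isValuation₂ h₁ (hT.mem_of_proves ho₁o)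
      fun v hv => by
        simp only [hv.imp_mem_iff]
        tauto
    have h₂' : φ.neg.imp o ∈ M := hT.mem_of_forall_isValuation₂ h₂ (hT.mem_of_proves ho₂o)
      fun v hv => by
        simp only [hv.imp_mem_iff]
        tauto
    exact hMO.notMem_of_mem_right ho <| hT.mem_of_forall_isValuation₂ h₁' h₂' fun v hv => by
      simp only [hv.imp_mem_iff, hv.neg_mem_iff]
      tauto

theorem IsTheory.isWorld (hT : IsTheory ∅ T) (hneg : ∀ φ, φ.neg ∈ T ↔ φ ∉ T) : IsWorld T where
  top_mem := hT.mem_of_proves (proves_of_forall_isValuation fun _ hv => hv.top_mem)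
  neg_mem_iff := hneg _
  and_mem_iff :=
    ⟨fun h => ⟨hT.mem_of_forall_isValuation h fun _ hv hv' => (hv.and_mem_iff.1 hv').1,
      hT.mem_of_forall_isValuation h fun _ hv hv' => (hv.and_mem_iff.1 hv').2⟩,
      fun h => hT.mem_of_forall_isValuation₂ h.1 h.2 fun _ hv h₁ h₂ => hv.and_mem_iff.2 ⟨h₁, h₂⟩⟩
  imp_mem_iff {φ ψ : GLPFormula} := by
    refine ⟨hT.mp, fun h => ?_⟩
    by_cases hφ : φ ∈ T
    · exact hT.mem_of_forall_isValuation (h hφ) fun _ hv hψ => hv.imp_mem_iff.2 fun _ => hψ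
    · exact hT.mem_of_forall_isValuation ((hneg φ).2 hφ) fun _ hv hφ' =>
        hv.imp_mem_iff.2 fun hφ => absurd hφ (hv.neg_mem_iff.1 hφ')
  mem_of_proves := hT.mem_of_proves

theorem IsTheory.exists_isWorld_disjoint (hT : IsTheory I T) (hne : O.Nonempty)
    (hdir : DirectedOn (fun φ ψ => GLPProves (φ.imp ψ)) O) (hTO : Disjoint T O) :
    ∃ v, IsWorld v ∧ T ⊆ v ∧ Disjoint v O := by
  obtain ⟨M, hTM, hM⟩ := (hT.anti (Set.empty_subset I)).exists_isMaximalAvoiding hTO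
  exact ⟨M, hM.prop.1.isWorld fun φ => hM.neg_mem_iff hne hdir, hTM, hM.prop.2⟩

/-! ### Completeness with respect to worlds -/

theorem IsWorld.isTheory (hv : IsWorld v) : IsTheory ∅ v :=
  ⟨hv.mem_of_proves, hv.imp_mem_iff.1, fun hi => hi.elim⟩

theorem IsTheory.exists_isWorld_of_notMem (hT : IsTheory I T) (hφ : φ ∉ T) :
    ∃ v, IsWorld v ∧ T ⊆ v ∧ φ ∉ v := by
  have hdir : DirectedOn (fun φ ψ => GLPProves (φ.imp ψ)) {φ} := by
    have hrefl : GLPProves (φ.imp φ) :=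
      proves_of_forall_isValuation fun _ hv => hv.imp_mem_iff.2 id
    simpa [DirectedOn] using hrefl
  simpa using hT.exists_isWorld_disjoint (Set.singleton_nonempty φ) hdir
    (Set.disjoint_singleton_right.2 hφ)

theorem isTheory_setOf_proves : IsTheory Set.univ {φ | GLPProves φ} :=
  ⟨id, .mp, .nec⟩

theorem proves_iff_forall_isWorld : GLPProves φ ↔ ∀ v, IsWorld v → φ ∈ v := by
  refine ⟨fun h v hv => hv.mem_of_proves h, fun h => ?_⟩
  by_contra hφ
  obtain ⟨v, hv, -, hφv⟩ := isTheory_setOf_proves.exists_isWorld_of_notMem hφ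
  exact hφv (h v hv)

theorem proves_imp_iff_forall_isWorld :
    GLPProves (φ.imp ψ) ↔ ∀ v, IsWorld v → φ ∈ v → ψ ∈ v :=
  proves_iff_forall_isWorld.trans (forall₂_congr fun _ hv => hv.imp_mem_iff)

theorem IsTheory.mem_of_forall_isWorld (hT : IsTheory I T) (hφ : φ ∈ T)
    (h : ∀ v, IsWorld v → φ ∈ v → ψ ∈ v) : ψ ∈ T :=
  hT.mp (hT.mem_of_proves (proves_imp_iff_forall_isWorld.2 h)) hφ

theorem IsValuation.listConj_mem_iff (hv : IsValuation v) {l : List GLPFormula} :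
    listConj l ∈ v ↔ ∀ φ ∈ l, φ ∈ v := by
  induction l with
  | nil => simp [listConj, hv.top_mem]
  | cons φ l ih => simp [listConj, hv.and_mem_iff, ih]

theorem isTheory_setOf_setProves (τ : Set GLPFormula) :
    IsTheory ∅ {φ | SetProves Set.univ τ φ} where
  mem_of_proves hφ :=
    ⟨[], by simp, proves_imp_iff_forall_isWorld.2 fun _ hv _ => hv.mem_of_proves hφ⟩
  mp := by
    rintro φ ψ ⟨l₁, hl₁, h₁⟩ ⟨l₂, hl₂, h₂⟩
    refine ⟨l₁ ++ l₂, fun χ hχ => (List.mem_append.1 hχ).elim (hl₁ χ) (hl₂ χ),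
      proves_imp_iff_forall_isWorld.2 fun v hv hl => ?_⟩
    rw [hv.listConj_mem_iff, List.forall_mem_append] at hl
    exact hv.imp_mem_iff.1
      (proves_imp_iff_forall_isWorld.1 h₁ v hv (hv.listConj_mem_iff.2 hl.1))
      (proves_imp_iff_forall_isWorld.1 h₂ v hv (hv.listConj_mem_iff.2 hl.2))
  box_mem hi := hi.elim

theorem setProves_iff_forall_isWorld {τ : Set GLPFormula} :
    SetProves Set.univ τ φ ↔ ∀ v, IsWorld v → τ ⊆ v → φ ∈ v := by
  constructor
  · rintro ⟨l, hl, h⟩ v hv hτ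
    exact proves_imp_iff_forall_isWorld.1 h v hv
      (hv.listConj_mem_iff.2 fun ψ hψ => hτ (hl ψ hψ))
  · intro h
    by_contra hφ
    obtain ⟨v, hv, hτv, hφv⟩ := (isTheory_setOf_setProves τ).exists_isWorld_of_notMem hφ
    refine hφv (h v hv fun ψ hψ => hτv ⟨[ψ], by simpa, ?_⟩)
    exact proves_imp_iff_forall_isWorld.2 fun w hw hl => hw.listConj_mem_iff.1 hl ψ (by simp)

/-! ### Boxes at a world -/

theorem IsWorld.boxTheory_mp (hv : IsWorld v) (h : φ.imp ψ ∈ boxTheory v i)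
    (hφ : φ ∈ boxTheory v i) : ψ ∈ boxTheory v i :=
  hv.isTheory.mp (hv.isTheory.mp (hv.mem_of_proves
    (.distr trivial (Set.subset_univ _) (Set.subset_univ _))) h) hφ

theorem IsWorld.dia_mem_iff (hv : IsWorld v) : dia i φ ∈ v ↔ φ.neg ∉ boxTheory v i :=
  hv.neg_mem_iff

theorem proves_neg_neg_imp : GLPProves (φ.neg.neg.imp φ) :=
  proves_of_forall_isValuation fun v hv => by
    simp [hv.imp_mem_iff, hv.neg_mem_iff]

theorem proves_imp_neg_neg : GLPProves (φ.imp φ.neg.neg) :=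
  proves_of_forall_isValuation fun v hv => by
    simp [hv.imp_mem_iff, hv.neg_mem_iff]

theorem IsWorld.dia_neg_mem_iff (hv : IsWorld v) : dia i φ.neg ∈ v ↔ φ ∉ boxTheory v i := by
  rw [hv.dia_mem_iff, not_iff_not]
  exact ⟨hv.boxTheory_mp (hv.mem_of_proves (.nec trivial proves_neg_neg_imp)),
    hv.boxTheory_mp (hv.mem_of_proves (.nec trivial proves_imp_neg_neg))⟩

theorem IsWorld.boxTheory_mono (hv : IsWorld v) : Monotone (boxTheory v) := by
  intro i k hik φ hφ
  rcases hik.eq_or_lt with rfl | hlt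
  · exact hφ
  by_contra hk
  exact hv.dia_neg_mem_iff.1 (hv.isTheory.mp (hv.mem_of_proves
    (.negIntro hlt trivial trivial (Set.subset_univ _))) (hv.dia_neg_mem_iff.2 hk)) hφ

theorem IsWorld.neg_box_mem_boxTheory (hv : IsWorld v) (hik : i < k) (hφ : φ ∉ boxTheory v i) :
    (box i φ).neg ∈ boxTheory v k := by
  have hdia : dia i φ.neg ∈ boxTheory v k := hv.isTheory.mp
    (hv.mem_of_proves (.mono hik trivial trivial (Set.subset_univ _))) (hv.dia_neg_mem_iff.2 hφ)
  refine hv.boxTheory_mp (hv.mem_of_proves (.nec trivial ?_)) hdia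
  exact proves_imp_iff_forall_isWorld.2 fun w hw h => hw.neg_mem_iff.2 (hw.dia_neg_mem_iff.1 h)

theorem IsWorld.box_mem_boxTheory (hv : IsWorld v) (hik : i ≤ k) (hφ : φ ∈ boxTheory v i) :
    box i φ ∈ boxTheory v k :=
  hv.boxTheory_mono hik
    (hv.isTheory.mp (hv.mem_of_proves (.trans trivial (Set.subset_univ _))) hφ)

theorem IsWorld.isTheory_boxTheory (hv : IsWorld v) : IsTheory (Set.Ici i) (boxTheory v i) where
  mem_of_proves hφ := hv.mem_of_proves (.nec trivial hφ)
  mp := hv.boxTheory_mp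
  box_mem {k φ} hik hφ := by
    refine hv.boxTheory_mp (hv.mem_of_proves (.nec trivial ?_))
      (hv.box_mem_boxTheory le_rfl hφ)
    exact proves_imp_iff_forall_isWorld.2 fun w hw h => hw.boxTheory_mono hik h

theorem IsWorld.boxTheory_subset_boxTheory (hv : IsWorld v) (hvu : boxTheory v j ⊆ u)
    (hij : i ≤ j) : boxTheory v i ⊆ boxTheory u i :=
  fun _ hφ => hvu (hv.box_mem_boxTheory hij hφ)

/-! ### Reflexive successors -/

theorem proves_and_box_imp_box_and_box (hik : i ≤ k) :
    GLPProves ((φ.and (box i φ)).imp (box k (φ.and (box i φ)))) := by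
  refine proves_imp_iff_forall_isWorld.2 fun w hw h => ?_
  have hφ : φ ∈ boxTheory w i := (hw.and_mem_iff.1 h).2
  exact hw.isTheory_boxTheory.mem_of_forall_isValuation₂ (hw.boxTheory_mono hik hφ)
    (hw.box_mem_boxTheory hik hφ) fun v hv h₁ h₂ => hv.and_mem_iff.2 ⟨h₁, h₂⟩

theorem IsMaximalAvoiding.exists_box_imp_mem {G : Set GLPFormula}
    (hG : IsMaximalAvoiding (Set.Ici i) O G)
    (hbox : ∀ o ∈ O, ∃ o' ∈ O, GLPProves ((box i o).imp o')) (hφ : φ ∉ G) :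
    ∃ o ∈ O, (box i φ).imp o ∈ G := by
  have hT := hG.prop.1
  have hand : φ.and (box i φ) ∉ G := fun h =>
    hφ (hT.mem_of_forall_isValuation h fun v hv h => (hv.and_mem_iff.1 h).1)
  obtain ⟨o, ho, h⟩ := hG.exists_imp_mem
    (fun k hik => hT.mem_of_proves (proves_and_box_imp_box_and_box hik)) hand
  obtain ⟨o', ho', hoo'⟩ := hbox o ho
  refine ⟨o', ho', hT.mem_of_forall_isWorld (hT.box_mem Set.self_mem_Ici h) fun w hw h => ?_⟩
  refine hw.imp_mem_iff.2 fun hφ => proves_imp_iff_forall_isWorld.1 hoo' w hw ?_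
  exact hw.boxTheory_mp h (hw.isTheory_boxTheory.mem_of_forall_isValuation₂ hφ
    (hw.box_mem_boxTheory le_rfl hφ) fun v hv h₁ h₂ => hv.and_mem_iff.2 ⟨h₁, h₂⟩)

theorem IsWorld.exists_reflexive_successor (hv : IsWorld v) (hne : O.Nonempty)
    (hdir : DirectedOn (fun φ ψ => GLPProves (φ.imp ψ)) O)
    (hbox : ∀ o ∈ O, ∃ o' ∈ O, GLPProves ((box i o).imp o')) (hvO : Disjoint v O) :
    ∃ u, IsWorld u ∧ boxTheory v i ⊆ u ∧ boxTheory u i ⊆ u := by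
  have hviO : Disjoint (boxTheory v i) O := Set.disjoint_right.2 fun o ho hov => by
    obtain ⟨o', ho', h⟩ := hbox o ho
    exact hvO.notMem_of_mem_right ho' (hv.isTheory.mp (hv.mem_of_proves h) hov)
  obtain ⟨G, hvG, hG⟩ := hv.isTheory_boxTheory.exists_isMaximalAvoiding hviO
  obtain ⟨u, hu, hGu, huO⟩ := hG.prop.1.exists_isWorld_disjoint hne hdir hG.prop.2
  have huG : boxTheory u i ⊆ G := fun φ hφ => by
    by_contra hφG
    obtain ⟨o, ho, h⟩ := hG.exists_box_imp_mem hbox hφG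
    exact huO.notMem_of_mem_right ho (hu.isTheory.mp (hGu h) hφ)
  exact ⟨u, hu, hvG.trans hGu, huG.trans hGu⟩

/-! ### Worlds with prescribed boxes -/

/-- The conditions characterising the families `boxTheory v` of worlds `v`. -/
structure IsBoxSystem (B : Ordinal → Set GLPFormula) : Prop where
  isTheory (i : Ordinal) : IsTheory (Set.Ici i) (B i)
  mono : Monotone B
  neg_box_mem {i k : Ordinal} {φ : GLPFormula} : i < k → φ ∉ B i → (box i φ).neg ∈ B k

theorem IsWorld.isBoxSystem (hv : IsWorld v) : IsBoxSystem (boxTheory v) :=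
  ⟨fun _ => hv.isTheory_boxTheory, hv.boxTheory_mono, hv.neg_box_mem_boxTheory⟩

/-- Truth of a formula when `[i]φ` is declared true for `φ ∈ B i`; variables are true, an arbitrary
choice. -/
def Holds (B : Ordinal → Set GLPFormula) : GLPFormula → Prop
  | .var _ => True
  | .top => True
  | .neg φ => ¬ Holds B φ
  | .and φ ψ => Holds B φ ∧ Holds B ψ
  | .imp φ ψ => Holds B φ → Holds B ψ
  | .box i φ => φ ∈ B i

theorem isValuation_setOf_holds (B : Ordinal → Set GLPFormula) : IsValuation {φ | Holds B φ} :=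
  ⟨trivial, Iff.rfl, Iff.rfl, Iff.rfl⟩

theorem IsBoxSystem.isWorld {B : Ordinal → Set GLPFormula} (hB : IsBoxSystem B) :
    IsWorld {φ | Holds B φ} where
  toIsValuation := isValuation_setOf_holds B
  mem_of_proves h := by
    induction h with
    | taut _ h => exact isTautology_iff_forall_isValuation.1 h _ (isValuation_setOf_holds B)
    | distr => exact (hB.isTheory _).mp
    | trans => exact (hB.isTheory _).box_mem Set.self_mem_Ici
    | @lob i φ =>
      intro h
      have hbox : box i φ ∈ B i := (hB.isTheory i).mp
        ((hB.isTheory i).mem_of_proves (.lob trivial (Set.subset_univ _)))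
        ((hB.isTheory i).box_mem Set.self_mem_Ici h)
      exact (hB.isTheory i).mp h hbox
    | negIntro hik => exact fun h h' => h (hB.mono hik.le h')
    | mono hik => exact hB.neg_box_mem hik
    | mp _ _ ih₁ ih₂ => exact ih₁ ih₂
    | nec _ h => exact (hB.isTheory _).mem_of_proves h

/-- The family equal to `B` below `m`, to `S` at `m` and to the inconsistent theory above `m`. -/
noncomputable def extendAt (B : Ordinal → Set GLPFormula) (m : Ordinal) (S : Set GLPFormula)
    (i : Ordinal) : Set GLPFormula :=
  open Classical in if i < m then B i else if i = m then S else Set.univ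

section extendAt

variable {B : Ordinal → Set GLPFormula} {S : Set GLPFormula}

theorem extendAt_of_lt (h : i < m) : extendAt B m S i = B i := if_pos h

theorem extendAt_self : extendAt B m S m = S := by
  simp [extendAt]

theorem extendAt_of_gt (h : m < i) : extendAt B m S i = Set.univ := by
  simp [extendAt, h.not_gt, h.ne']

theorem IsBoxSystem.extendAt (hB : IsBoxSystem B) (hS : IsTheory (Set.Ici m) S)
    (hBS : ∀ i < m, B i ⊆ S) (hneg : ∀ i < m, ∀ φ ∉ B i, (box i φ).neg ∈ S) :
    IsBoxSystem (extendAt B m S) where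
  isTheory i := by
    rcases lt_trichotomy i m with h | rfl | h
    · rw [extendAt_of_lt h]
      exact hB.isTheory i
    · rwa [extendAt_self]
    · rw [extendAt_of_gt h]
      exact isTheory_univ
  mono := by
    refine monotone_iff_forall_lt.2 fun i k hik => ?_
    rcases lt_trichotomy k m with h | rfl | h
    · rw [extendAt_of_lt h, extendAt_of_lt (hik.trans h)]
      exact hB.mono hik.le
    · rw [extendAt_self, extendAt_of_lt hik]
      exact hBS i hik
    · rw [extendAt_of_gt h]
      exact Set.subset_univ _
  neg_box_mem {i k φ} hik hφ := by
    rcases lt_trichotomy k m with h | rfl | h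
    · rw [extendAt_of_lt (hik.trans h)] at hφ
      rw [extendAt_of_lt h]
      exact hB.neg_box_mem hik hφ
    · rw [extendAt_of_lt hik] at hφ
      rw [extendAt_self]
      exact hneg i hik φ hφ
    · rw [extendAt_of_gt h]
      trivial

end extendAt

/-- The consequences over `boxTheory v n` of the formulas `δ` true at `v` and provably implying
`[i]δ` for `i > n`; among such `δ` are the true formulas `¬[i]φ` with `i ≤ n`. -/
def succTheory (v : Set GLPFormula) (n : Ordinal) : Set GLPFormula :=
  {φ | ∃ δ ∈ v, (∀ i, n < i → GLPProves (δ.imp (box i δ))) ∧ δ.imp φ ∈ boxTheory v n}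

theorem IsWorld.boxTheory_subset_succTheory (hv : IsWorld v) (hin : i ≤ n) :
    boxTheory v i ⊆ succTheory v n := fun φ hφ => by
  refine ⟨top, hv.top_mem, fun k _ => ?_, ?_⟩
  · exact proves_imp_iff_forall_isWorld.2 fun w hw _ =>
      hw.isTheory_boxTheory.mem_of_proves (proves_of_forall_isValuation fun _ h => h.top_mem)
  · exact hv.isTheory_boxTheory.mem_of_forall_isValuation (hv.boxTheory_mono hin hφ)
      fun w hw hφw => hw.imp_mem_iff.2 fun _ => hφw

theorem IsWorld.neg_box_mem_succTheory (hv : IsWorld v) (hin : i ≤ n) (hφ : φ ∉ boxTheory v i) :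
    (box i φ).neg ∈ succTheory v n := by
  refine ⟨_, hv.neg_mem_iff.2 hφ, fun k hnk => ?_, ?_⟩
  · exact proves_imp_iff_forall_isWorld.2 fun w hw h =>
      hw.neg_box_mem_boxTheory (hin.trans_lt hnk) (hw.neg_mem_iff.1 h)
  · exact hv.isTheory_boxTheory.mem_of_proves
      (proves_imp_iff_forall_isWorld.2 fun _ _ h => h)

theorem proves_and_imp_box_and (hφ : GLPProves (φ.imp (box i φ)))
    (hψ : GLPProves (ψ.imp (box i ψ))) : GLPProves ((φ.and ψ).imp (box i (φ.and ψ))) := by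
  refine proves_imp_iff_forall_isWorld.2 fun w hw h => ?_
  obtain ⟨h₁, h₂⟩ := hw.and_mem_iff.1 h
  exact hw.isTheory_boxTheory.mem_of_forall_isValuation₂
    (proves_imp_iff_forall_isWorld.1 hφ w hw h₁) (proves_imp_iff_forall_isWorld.1 hψ w hw h₂)
    fun v hv h₁ h₂ => hv.and_mem_iff.2 ⟨h₁, h₂⟩

theorem IsWorld.isTheory_succTheory (hv : IsWorld v) :
    IsTheory (Set.Ici (n + 1)) (succTheory v n) where
  mem_of_proves hφ := hv.boxTheory_subset_succTheory le_rfl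
    (hv.isTheory_boxTheory.mem_of_proves hφ)
  mp := by
    rintro φ ψ ⟨δ, hδv, hδ, hφψ⟩ ⟨ε, hεv, hε, hφ⟩
    refine ⟨δ.and ε, hv.and_mem_iff.2 ⟨hδv, hεv⟩,
      fun i hi => proves_and_imp_box_and (hδ i hi) (hε i hi), ?_⟩
    exact hv.isTheory_boxTheory.mem_of_forall_isValuation₂ hφψ hφ fun w hw => by
      simp only [hw.imp_mem_iff, hw.and_mem_iff]
      tauto
  box_mem := by
    rintro i φ hi ⟨δ, hδv, hδ, hφ⟩
    have hT : IsTheory (Set.Ioi n) (boxTheory v n) :=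
      hv.isTheory_boxTheory.anti Set.Ioi_subset_Ici_self
    exact ⟨δ, hδv, hδ, (hT.setOf_imp_mem fun k hk => hT.mem_of_proves (hδ k hk)).box_mem
      (Set.mem_Ioi.2 (Order.add_one_le_iff.1 (Set.mem_Ici.1 hi))) hφ⟩

theorem IsWorld.succTheory_subset (hv : IsWorld v) (hrefl : boxTheory v n ⊆ v) :
    succTheory v n ⊆ v := by
  rintro φ ⟨δ, hδv, -, hφ⟩
  exact hv.isTheory.mp (hrefl hφ) hδv

theorem IsWorld.exists_isWorld_dia_add_one_top (hv : IsWorld v) (hrefl : boxTheory v n ⊆ v) :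
    ∃ w, IsWorld w ∧ (∀ i ≤ n, boxTheory w i = boxTheory v i) ∧ dia (n + 1) top ∈ w := by
  have hB : IsBoxSystem (extendAt (boxTheory v) (n + 1) (succTheory v n)) :=
    hv.isBoxSystem.extendAt hv.isTheory_succTheory
      (fun i hi => hv.boxTheory_subset_succTheory (Order.lt_add_one_iff.1 hi))
      (fun i hi _ => hv.neg_box_mem_succTheory (Order.lt_add_one_iff.1 hi))
  refine ⟨_, hB.isWorld, fun i hi => extendAt_of_lt (Order.lt_add_one_iff.2 hi),
    hB.isWorld.dia_mem_iff.2 fun h => ?_⟩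
  have hbot : top.neg ∈ succTheory v n := extendAt_self.subset h
  exact hv.neg_mem_iff.1 (hv.succTheory_subset hrefl hbot) hv.top_mem

/-! ### Iterated consistency -/

/-- The formulas `¬⟨n⟩^k⊤`. -/
def iteratedInconsistency (n : Ordinal) : Set GLPFormula :=
  Set.range fun k => (diaPow n k top).neg

theorem IsWorld.antitone_diaPow_top_mem (hv : IsWorld v) :
    Antitone fun k => diaPow n k top ∈ v := by
  suffices ∀ k v, IsWorld v → diaPow n (k + 1) top ∈ v → diaPow n k top ∈ v from
    antitone_nat_of_succ_le fun k => this k v hv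
  intro k
  induction k with
  | zero => exact fun v hv _ => hv.top_mem
  | succ k ih =>
    refine fun v hv h => hv.dia_mem_iff.2 fun hk => hv.dia_mem_iff.1 h ?_
    refine hv.isTheory_boxTheory.mem_of_forall_isWorld hk fun w hw hk => ?_
    exact hw.neg_mem_iff.2 (mt (ih w hw) (hw.neg_mem_iff.1 hk))

theorem directedOn_iteratedInconsistency :
    DirectedOn (fun φ ψ => GLPProves (φ.imp ψ)) (iteratedInconsistency n) :=
  directedOn_range.2 <| directed_of_isDirected_le fun _ _ hkm =>
    proves_imp_iff_forall_isWorld.2 fun _ hv h =>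
      hv.neg_mem_iff.2 (mt (hv.antitone_diaPow_top_mem hkm) (hv.neg_mem_iff.1 h))

theorem exists_proves_box_imp_of_mem_iteratedInconsistency (hφ : φ ∈ iteratedInconsistency n) :
    ∃ ψ ∈ iteratedInconsistency n, GLPProves ((box n φ).imp ψ) := by
  obtain ⟨k, rfl⟩ := hφ
  exact ⟨_, ⟨k + 1, rfl⟩, proves_imp_neg_neg⟩

theorem IsWorld.exists_successor_diaPow_top (hv : IsWorld v)
    (h : ∀ k, dia j (diaPow n k top) ∈ v) :
    ∃ u, IsWorld u ∧ boxTheory v j ⊆ u ∧ Disjoint u (iteratedInconsistency n) :=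
  hv.isTheory_boxTheory.exists_isWorld_disjoint (Set.range_nonempty _)
    directedOn_iteratedInconsistency
    (Set.disjoint_right.2 (Set.forall_mem_range.2 fun k => hv.dia_mem_iff.1 (h k)))

theorem IsWorld.exists_isWorld_dia_add_one_top_of_dia_diaPow_top (hv : IsWorld v) (hjn : j ≤ n)
    (h : ∀ k, dia j (diaPow n k top) ∈ v) :
    ∃ w, IsWorld w ∧ boxTheory v j ⊆ boxTheory w j ∧ dia (n + 1) top ∈ w := by
  obtain ⟨u, hu, hvu, huO⟩ := hv.exists_successor_diaPow_top h
  obtain ⟨u', hu', huu', hrefl⟩ := hu.exists_reflexive_successor (Set.range_nonempty _)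
    directedOn_iteratedInconsistency
    (fun _ => exists_proves_box_imp_of_mem_iteratedInconsistency) huO
  obtain ⟨w, hw, hwu', htop⟩ := hu'.exists_isWorld_dia_add_one_top hrefl
  refine ⟨w, hw, ?_, htop⟩
  calc boxTheory v j ⊆ boxTheory u j := hv.boxTheory_subset_boxTheory hvu le_rfl
    _ ⊆ boxTheory u' j := hu.boxTheory_subset_boxTheory huu' hjn
    _ = boxTheory w j := (hwu' j hjn).symm

theorem IsWorld.dia_mem_of_le (hv : IsWorld v) (hik : i ≤ k) (h : dia k φ ∈ v) : dia i φ ∈ v :=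
  hv.dia_mem_iff.2 fun hi => hv.dia_mem_iff.1 h (hv.boxTheory_mono hik hi)

theorem IsWorld.dia_diaPow_mem (hv : IsWorld v) (hnm : n < m) (h : dia m φ ∈ v) (k : ℕ) :
    dia m (diaPow n k φ) ∈ v := by
  induction k with
  | zero => exact h
  | succ k ih =>
    have hbox : dia n (diaPow n k φ) ∈ boxTheory v m :=
      hv.neg_box_mem_boxTheory hnm (hv.dia_mem_iff.1 (hv.dia_mem_of_le hnm.le ih))
    refine hv.dia_mem_iff.2 fun hneg => hv.dia_mem_iff.1 h ?_
    exact hv.isTheory_boxTheory.mem_of_forall_isValuation₂ hbox hneg fun w hw h₁ h₂ =>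
      absurd h₁ (hw.neg_mem_iff.1 h₂)

end GLP

open GLP in
theorem pi_j_consequences_worms_general (j n : Ordinal) (hjn : j ≤ n) (ψ : GLPFormula) :
    GLPProves ((GLPFormula.dia (n + 1) GLPFormula.top).imp (GLPFormula.dia j ψ)) ↔
      SetProves Set.univ
        {χ | ∃ k : ℕ, χ = GLPFormula.dia j (diaPow n k GLPFormula.top)}
        (GLPFormula.dia j ψ) := by
  rw [proves_imp_iff_forall_isWorld, setProves_iff_forall_isWorld]
  constructor
  · intro h v hv hτ
    obtain ⟨w, hw, hvw, htop⟩ :=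
      hv.exists_isWorld_dia_add_one_top_of_dia_diaPow_top hjn fun k => hτ ⟨k, rfl⟩
    have hψ : ψ.neg ∉ boxTheory w j := hw.dia_mem_iff.1 (h w hw htop)
    exact hv.dia_mem_iff.2 fun hψv => hψ (hvw hψv)
  · intro h v hv htop
    refine h v hv ?_
    rintro _ ⟨k, rfl⟩
    exact hv.dia_mem_of_le (hjn.trans (lt_add_one n).le) (hv.dia_diaPow_mem (lt_add_one n) htop k)

/-- For `j ≤ n`, `{⟨j⟩⟨n⟩^k⊤ : k < ω}` is `j`-conservative over `⟨n+1⟩⊤`. -/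
theorem pi_j_consequences_worms (j n : ℕ) (hjn : j ≤ n)
    (ψ : GLPFormula) (hψ : IsOmegaFormula ψ) :
    GLPProves ((GLPFormula.dia ((n : Ordinal) + 1) GLPFormula.top).imp
        (GLPFormula.dia (j : Ordinal) ψ)) ↔
      SetProves Set.univ
        {χ | ∃ k : ℕ, χ = GLPFormula.dia (j : Ordinal) (diaPow (n : Ordinal) k GLPFormula.top)}
        (GLPFormula.dia (j : Ordinal) ψ) :=
  pi_j_consequences_worms_general j n (by exact_mod_cast hjn) ψ
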